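/- Let p = 2m be a positive even integer, H a complex Hilbert space with grading operator ε, and F bounded with F² = 1 and Fε = −εF. Let A be a ℂ-algebra and for each t ∈ [0,1] let ρ_t : A → B(H) be a homomorphism into even operators such that for each a ∈ A: (1) [F,ρ_t(a)] = Fρ_t(a) − ρ_t(a)F is p-Schatten and t ↦ [F,ρ_t(a)] is continuous from [0,1] into the p-Schatten operators with the p-Schatten norm; (2) t ↦ ρ_t(a) is C¹ in operator norm, with derivative δ_t(a). Then for all a₀,…,a_p ∈ A the function t ↦ τ^p_t(a₀,…,a_p) := (2iπ)^m m! Trace(ε ρ_t(a₀)[F,ρ_t(a₁)]⋯[F,ρ_t(a_p)]) is differentiable on [0,1] with derivative (d/dt) τ^p_t(a₀,…,a_p) = (2iπ)^m m! Σ_{k=0}^{p} (−1)^k Trace(ε [F,ρ_t(a₀)]⋯[F,ρ_t(a_{k−1})] δ_t(a_k) [F,ρ_t(a_{k+1})]⋯[F,ρ_t(a_p)]) (for k = 0 the product preceding δ_t(a₀) is empty). -/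

import Mathlib

open scoped ENNReal

noncomputable section

variable {H : Type*} [NormedAddCommGroup H] [InnerProductSpace ℂ H] [CompleteSpace H]
variable {A : Type*} [NonUnitalRing A] [Module ℂ A] [SMulCommClass ℂ A A] [IsScalarTower ℂ A A]

/-- The `n`-th singular value of a (compact) operator `T` (approximation numbers). -/
def sval (T : H →L[ℂ] H) (n : ℕ) : ℝ :=
  sInf {c : ℝ | ∃ R : H →L[ℂ] H,
    Module.rank ℂ (LinearMap.range (R : H →ₗ[ℂ] H)) ≤ (n : Cardinal) ∧ c = ‖T - R‖}

/-- The `p`-Schatten norm `‖T‖_p = (Σ_n s_n(T)^p)^(1/p)`, valued in `ℝ≥0∞`. -/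
def schattenNorm (p : ℝ) (T : H →L[ℂ] H) : ℝ≥0∞ :=
  (∑' n : ℕ, ENNReal.ofReal (sval T n ^ p)) ^ (1 / p)

/-- `T` is a `p`-Schatten operator: compact with finite `p`-Schatten norm. -/
def MemSchatten (p : ℝ) (T : H →L[ℂ] H) : Prop :=
  IsCompactOperator (⇑T) ∧ schattenNorm p T < ⊤

/-- The trace of an operator, computed in a (choice of) Hilbert basis of `H`. -/
def opTrace (T : H →L[ℂ] H) : ℂ :=
  ∑' i : (exists_hilbertBasis ℂ H).choose,
    @inner ℂ H _ ((exists_hilbertBasis ℂ H).choose_spec.choose i)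
      (T ((exists_hilbertBasis ℂ H).choose_spec.choose i))

/-- The commutator `[F, T] = FT - TF`. -/
def commOp (F T : H →L[ℂ] H) : H →L[ℂ] H := F * T - T * F

/-- The ordered product `f s * f (s+1) * ⋯ * f (s+k-1)` of operators. -/
def opList (f : ℕ → H →L[ℂ] H) (s k : ℕ) : H →L[ℂ] H := ((List.range' s k).map f).prod

/-- Cyclic indexing of a tuple by natural numbers. -/
def natIdx {A : Type*} {m : ℕ} (a : Fin (m + 1) → A) (k : ℕ) : A :=
  a ⟨k % (m + 1), Nat.mod_lt _ (Nat.succ_pos m)⟩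

set_option linter.unusedSectionVars false

/-! ### Nuclear representations and the trace -/

/-- A nuclear representation of `T` of total weight at most `c`. -/
def NucRep (T : H →L[ℂ] H) (c : ℝ≥0∞) : Prop :=
  ∃ (ι : Type) (u v : ι → H), ∑' j, ‖u j‖ₑ * ‖v j‖ₑ ≤ c ∧
    ∀ x, HasSum (fun j => (inner ℂ (v j) x : ℂ) • u j) (T x)

theorem bessel_cs {ι : Type*} (b : HilbertBasis ι ℂ H) (u v : H) :
    ∑' i, ‖(inner ℂ v (b i) : ℂ) * inner ℂ (b i) u‖ₑ ≤ ‖u‖ₑ * ‖v‖ₑ := by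
  rw [ENNReal.tsum_eq_iSup_sum]
  refine iSup_le fun s => ?_
  have h1 : ∑ i ∈ s, ‖(inner ℂ v (b i) : ℂ) * inner ℂ (b i) u‖ ≤ ‖u‖ * ‖v‖ := by
    have hu := b.orthonormal.sum_inner_products_le u (s := s)
    have hv := b.orthonormal.sum_inner_products_le v (s := s)
    have := Finset.sum_mul_sq_le_sq_mul_sq s (fun i => ‖(inner ℂ (b i) u : ℂ)‖)
      (fun i => ‖(inner ℂ (b i) v : ℂ)‖)
    have h2 : ∑ i ∈ s, ‖(inner ℂ v (b i) : ℂ) * inner ℂ (b i) u‖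
        = ∑ i ∈ s, ‖(inner ℂ (b i) u : ℂ)‖ * ‖(inner ℂ (b i) v : ℂ)‖ := by
      refine Finset.sum_congr rfl fun i _ => ?_
      rw [norm_mul, norm_inner_symm v, mul_comm]
    rw [h2]
    refine abs_le_of_sq_le_sq' ?_ (by positivity) |>.2
    rw [mul_pow]
    refine this.trans ?_
    gcongr
  calc ∑ i ∈ s, ‖(inner ℂ v (b i) : ℂ) * inner ℂ (b i) u‖ₑ
      = ENNReal.ofReal (∑ i ∈ s, ‖(inner ℂ v (b i) : ℂ) * inner ℂ (b i) u‖) := by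
        rw [ENNReal.ofReal_sum_of_nonneg (fun _ _ => norm_nonneg _)]
        simp
    _ ≤ ENNReal.ofReal (‖u‖ * ‖v‖) := ENNReal.ofReal_le_ofReal h1
    _ = _ := by
        rw [ENNReal.ofReal_mul (norm_nonneg _), ofReal_norm, ofReal_norm]

theorem rep_hasSum {ι : Type} {u v : ι → H} {T : H →L[ℂ] H}
    (hc : ∑' j, ‖u j‖ₑ * ‖v j‖ₑ ≠ ⊤)
    (hT : ∀ x, HasSum (fun j => (inner ℂ (v j) x : ℂ) • u j) (T x))
    {B : Type*} (b : HilbertBasis B ℂ H) :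
    HasSum (fun i => (inner ℂ (b i) (T (b i)) : ℂ)) (∑' j, (inner ℂ (v j) (u j) : ℂ)) := by
  have hs : Summable (fun q : ι × B =>
      (inner ℂ (v q.1) (b q.2) : ℂ) * inner ℂ (b q.2) (u q.1)) := by
    apply Summable.of_enorm
    rw [ENNReal.tsum_prod (f := fun j i =>
      ‖(inner ℂ (v j) (b i) : ℂ) * inner ℂ (b i) (u j)‖ₑ)]
    exact ne_top_of_le_ne_top hc (ENNReal.tsum_le_tsum fun j => bessel_cs b (u j) (v j))
  have h1 := hs.hasSum.prod_fiberwise (fun j => b.hasSum_inner_mul_inner (v j) (u j))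
  have h2 : HasSum (fun q : B × ι =>
      (inner ℂ (v q.2) (b q.1) : ℂ) * inner ℂ (b q.1) (u q.2)) _ :=
    (Equiv.prodComm B ι).hasSum_iff.2 hs.hasSum
  have h3 := h2.prod_fiberwise (g := fun i => (inner ℂ (b i) (T (b i)) : ℂ)) (fun i => by
    have := (hT (b i)).mapL (innerSL ℂ (b i))
    simpa [inner_smul_right] using this)
  rw [h1.tsum_eq]
  exact h3

theorem opTrace_hasSum_of_rep {ι : Type} {u v : ι → H} {T : H →L[ℂ] H}
    (hc : ∑' j, ‖u j‖ₑ * ‖v j‖ₑ ≠ ⊤)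
    (hT : ∀ x, HasSum (fun j => (inner ℂ (v j) x : ℂ) • u j) (T x)) :
    opTrace T = ∑' j, (inner ℂ (v j) (u j) : ℂ) :=
  (rep_hasSum hc hT _).tsum_eq

theorem NucRep.summable {T : H →L[ℂ] H} {c : ℝ≥0∞} (h : NucRep T c) (hc : c ≠ ⊤) :
    Summable (fun i : (exists_hilbertBasis ℂ H).choose =>
    @inner ℂ H _ ((exists_hilbertBasis ℂ H).choose_spec.choose i)
      (T ((exists_hilbertBasis ℂ H).choose_spec.choose i))) := by
  obtain ⟨ι, u, v, h1, h2⟩ := h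
  exact (rep_hasSum (ne_top_of_le_ne_top hc h1) h2 _).summable

theorem enorm_tsum_le' {ι : Type*} (f : ι → ℂ) :
    ‖∑' i, f i‖ₑ ≤ ∑' i, ‖f i‖ₑ := by
  exact enorm_tsum_le_tsum_enorm

theorem NucRep.enorm_opTrace_le {T : H →L[ℂ] H} {c : ℝ≥0∞} (h : NucRep T c) :
    ‖opTrace T‖ₑ ≤ c := by
  rcases eq_or_ne c ⊤ with rfl | hc
  · exact le_top
  obtain ⟨ι, u, v, h1, h2⟩ := h
  rw [opTrace_hasSum_of_rep (ne_top_of_le_ne_top hc h1) h2]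
  have h3 : ∑' j, ‖(inner ℂ (v j) (u j) : ℂ)‖ₑ ≤ ∑' j, ‖u j‖ₑ * ‖v j‖ₑ := by
    refine ENNReal.tsum_le_tsum fun j => ?_
    rw [mul_comm, ← ofReal_norm, ← ofReal_norm, ← ofReal_norm,
      ← ENNReal.ofReal_mul (norm_nonneg _)]
    exact ENNReal.ofReal_le_ofReal (norm_inner_le_norm _ _)
  exact (enorm_tsum_le' _).trans (h3.trans h1)

theorem NucRep.opTrace_add {S T : H →L[ℂ] H} {c d : ℝ≥0∞} (hS : NucRep S c) (hT : NucRep T d)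
    (hc : c ≠ ⊤) (hd : d ≠ ⊤) : opTrace (S + T) = opTrace S + opTrace T := by
  unfold opTrace
  rw [← (hS.summable hc).tsum_add (hT.summable hd)]
  simp

theorem opTrace_smul (z : ℂ) (T : H →L[ℂ] H) : opTrace (z • T) = z * opTrace T := by
  unfold opTrace
  rw [← tsum_mul_left]
  simp

theorem NucRep.mono {T : H →L[ℂ] H} {c d : ℝ≥0∞} (hT : NucRep T c) (h : c ≤ d) : NucRep T d := by
  obtain ⟨ι, u, v, h1, h2⟩ := hT
  exact ⟨ι, u, v, h1.trans h, h2⟩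

theorem NucRep.mul_left {T : H →L[ℂ] H} {c : ℝ≥0∞} (hT : NucRep T c) (B : H →L[ℂ] H) :
    NucRep (B * T) (‖B‖ₑ * c) := by
  obtain ⟨ι, u, v, h1, h2⟩ := hT
  refine ⟨ι, fun j => B (u j), v, ?_, fun x => ?_⟩
  · calc ∑' j, ‖B (u j)‖ₑ * ‖v j‖ₑ ≤ ∑' j, ‖B‖ₑ * (‖u j‖ₑ * ‖v j‖ₑ) := by
          refine ENNReal.tsum_le_tsum fun j => ?_
          rw [← mul_assoc]
          gcongr
          exact B.le_opENorm (u j)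
      _ = ‖B‖ₑ * ∑' j, ‖u j‖ₑ * ‖v j‖ₑ := ENNReal.tsum_mul_left
      _ ≤ _ := by gcongr
  · simpa using (h2 x).mapL B

theorem NucRep.opTrace_comm {T : H →L[ℂ] H} {c : ℝ≥0∞} (hT : NucRep T c) (hc : c ≠ ⊤)
    (B : H →L[ℂ] H) : opTrace (B * T) = opTrace (T * B) := by
  obtain ⟨ι, u, v, h1, h2⟩ := hT
  have h3 : ∑' j, ‖B (u j)‖ₑ * ‖v j‖ₑ ≠ ⊤ := by
    refine ne_top_of_le_ne_top (ENNReal.mul_ne_top (enorm_ne_top (x := B)) hc) ?_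
    calc ∑' j, ‖B (u j)‖ₑ * ‖v j‖ₑ ≤ ∑' j, ‖B‖ₑ * (‖u j‖ₑ * ‖v j‖ₑ) := by
          refine ENNReal.tsum_le_tsum fun j => ?_
          rw [← mul_assoc]
          gcongr
          exact B.le_opENorm (u j)
      _ = ‖B‖ₑ * ∑' j, ‖u j‖ₑ * ‖v j‖ₑ := ENNReal.tsum_mul_left
      _ ≤ _ := by gcongr
  have h4 : ∑' j, ‖u j‖ₑ * ‖(ContinuousLinearMap.adjoint B) (v j)‖ₑ ≠ ⊤ := by
    refine ne_top_of_le_ne_top (ENNReal.mul_ne_top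
      (enorm_ne_top (x := ContinuousLinearMap.adjoint B)) hc) ?_
    calc ∑' j, ‖u j‖ₑ * ‖(ContinuousLinearMap.adjoint B) (v j)‖ₑ
        ≤ ∑' j, ‖ContinuousLinearMap.adjoint B‖ₑ * (‖u j‖ₑ * ‖v j‖ₑ) := by
          refine ENNReal.tsum_le_tsum fun j => ?_
          rw [mul_left_comm]
          gcongr
          exact (ContinuousLinearMap.adjoint B).le_opENorm (v j)
      _ = ‖ContinuousLinearMap.adjoint B‖ₑ * ∑' j, ‖u j‖ₑ * ‖v j‖ₑ := ENNReal.tsum_mul_left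
      _ ≤ _ := by gcongr
  rw [opTrace_hasSum_of_rep (T := B * T) h3 (fun x => by simpa using (h2 x).mapL B),
    opTrace_hasSum_of_rep (T := T * B) h4 (fun x => by
      simpa [ContinuousLinearMap.adjoint_inner_left] using h2 (B x))]
  simp [ContinuousLinearMap.adjoint_inner_left]

theorem NucRep.hasSum {T : H →L[ℂ] H} {S : ℕ → H →L[ℂ] H} {c : ℕ → ℝ≥0∞} {d : ℝ≥0∞}
    (hS : ∀ k, NucRep (S k) (c k)) (hd : ∑' k, c k ≤ d) (hd' : d ≠ ⊤)
    (hT : ∀ x, Filter.Tendsto (fun n => ∑ k ∈ Finset.range n, S k x) Filter.atTop (nhds (T x))) :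
    NucRep T d := by
  choose ι u v h1 h2 using hS
  have h3 : ∑' j : (Σ k, ι k), ‖u j.1 j.2‖ₑ * ‖v j.1 j.2‖ₑ ≤ d := by
    rw [ENNReal.tsum_sigma' (fun j : (Σ k, ι k) => ‖u j.1 j.2‖ₑ * ‖v j.1 j.2‖ₑ)]
    exact (ENNReal.tsum_le_tsum h1).trans hd
  refine ⟨Σ k, ι k, fun j => u j.1 j.2, fun j => v j.1 j.2, h3, fun x => ?_⟩
  have hs : Summable (fun j : (Σ k, ι k) => (inner ℂ (v j.1 j.2) x : ℂ) • u j.1 j.2) := by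
    apply Summable.of_enorm
    refine ne_top_of_le_ne_top (ENNReal.mul_ne_top hd' (enorm_ne_top (x := x))) ?_
    refine le_trans ?_ (mul_le_mul_left h3 ‖x‖ₑ)
    rw [← ENNReal.tsum_mul_right]
    refine ENNReal.tsum_le_tsum fun j => ?_
    rw [enorm_smul, mul_assoc, mul_comm]
    gcongr
    rw [← ofReal_norm, ← ofReal_norm, ← ofReal_norm,
      ← ENNReal.ofReal_mul (norm_nonneg _)]
    exact ENNReal.ofReal_le_ofReal (norm_inner_le_norm _ _)
  have h4 := hs.hasSum.sigma (fun k => h2 k x)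
  rw [tendsto_nhds_unique (hT x) h4.tendsto_sum_nat]
  exact hs.hasSum

theorem NucRep.zero : NucRep (0 : H →L[ℂ] H) 0 :=
  ⟨Empty, fun _ => 0, fun _ => 0, by simp, fun x => by simp⟩

theorem NucRep.add {S T : H →L[ℂ] H} {c d : ℝ≥0∞} (hS : NucRep S c) (hT : NucRep T d)
    (hc : c ≠ ⊤) (hd : d ≠ ⊤) : NucRep (S + T) (c + d) := by
  refine NucRep.hasSum (S := fun k => if k = 0 then S else if k = 1 then T else 0)
    (c := fun k => if k = 0 then c else if k = 1 then d else 0) ?_ ?_ (by finiteness) ?_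
  · intro k
    split_ifs
    · exact hS
    · exact hT
    · exact NucRep.zero
  · rw [tsum_eq_sum (s := Finset.range 2) (by
      intro b hb; simp at hb; rw [if_neg (by omega), if_neg (by omega)])]
    simp [Finset.sum_range_succ]
  · intro x
    refine tendsto_const_nhds.congr' ?_
    filter_upwards [Filter.eventually_ge_atTop 2] with n hn
    obtain ⟨n, rfl⟩ := Nat.exists_eq_add_of_le hn
    rw [add_comm 2 n, Finset.sum_range_succ', Finset.sum_range_succ']
    simp [add_comm]

theorem NucRep.of_rank {D : H →L[ℂ] H} {n : ℕ}
    (hD : Module.rank ℂ (LinearMap.range (D : H →ₗ[ℂ] H)) ≤ (n : Cardinal)) :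
    NucRep D (n * ‖D‖ₑ) := by
  have hfin : Module.Finite ℂ (LinearMap.range (D : H →ₗ[ℂ] H)) :=
    Module.rank_lt_aleph0_iff.1 (hD.trans_lt (Cardinal.natCast_lt_aleph0))
  set V := LinearMap.range (D : H →ₗ[ℂ] H) with hV
  have hr : Module.finrank ℂ V ≤ n := Module.finrank_le_of_rank_le hD
  let b := stdOrthonormalBasis ℂ V
  refine ⟨Fin (Module.finrank ℂ V), fun i => (b i : H),
    fun i => ContinuousLinearMap.adjoint D (b i), ?_, fun x => ?_⟩
  · rw [tsum_fintype]
    have hb : ∀ i, ‖(b i : H)‖ₑ = 1 := fun i => by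
      rw [← ofReal_norm]
      have := b.orthonormal.1 i
      simp only [Submodule.coe_norm] at this
      simp [this]
    calc ∑ i, ‖(b i : H)‖ₑ * ‖ContinuousLinearMap.adjoint D (b i)‖ₑ
        ≤ ∑ i : Fin (Module.finrank ℂ V), ‖D‖ₑ := by
          refine Finset.sum_le_sum fun i _ => ?_
          rw [hb, one_mul]
          refine ((ContinuousLinearMap.adjoint D).le_opENorm _).trans ?_
          rw [hb, mul_one, ← ofReal_norm, ← ofReal_norm,
            LinearIsometryEquiv.norm_map]
      _ = (Module.finrank ℂ V : ℝ≥0∞) * ‖D‖ₑ := by simp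
      _ ≤ _ := by gcongr
  · have h1 := b.sum_repr' ⟨D x, ⟨x, rfl⟩⟩
    have h2 := congrArg (Submodule.subtype V) h1
    simp only [map_sum, map_smul, Submodule.subtype_apply, Submodule.coe_inner] at h2
    have h3 := hasSum_fintype (fun i => (inner ℂ (ContinuousLinearMap.adjoint D (b i)) x : ℂ) • (b i : H))
    simp only [ContinuousLinearMap.adjoint_inner_left] at h3 ⊢
    rw [h2] at h3
    exact h3

/-! ### Approximation numbers -/

/-- Rank of (the linear map underlying) an operator is at most `n`. -/
def RankLe (R : H →L[ℂ] H) (n : ℕ) : Prop :=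
  Module.rank ℂ (LinearMap.range (R : H →ₗ[ℂ] H)) ≤ (n : Cardinal)

theorem RankLe.zero (n : ℕ) : RankLe (0 : H →L[ℂ] H) n := by
  have : LinearMap.range ((0 : H →L[ℂ] H) : H →ₗ[ℂ] H) = ⊥ := by simp
  unfold RankLe
  rw [this]
  simp

theorem RankLe.mono {R : H →L[ℂ] H} {n k : ℕ} (h : RankLe R n) (hnk : n ≤ k) : RankLe R k :=
  le_trans h (by exact_mod_cast hnk)

theorem RankLe.add {R S : H →L[ℂ] H} {n k : ℕ} (h : RankLe R n) (h' : RankLe S k) :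
    RankLe (R + S) (n + k) := by
  have h1 := LinearMap.rank_add_le (R : H →ₗ[ℂ] H) (S : H →ₗ[ℂ] H)
  unfold RankLe at *
  push_cast
  exact h1.trans (add_le_add h h')

theorem RankLe.neg {R : H →L[ℂ] H} {n : ℕ} (h : RankLe R n) : RankLe (-R) n := by
  have : LinearMap.range ((-R : H →L[ℂ] H) : H →ₗ[ℂ] H)
      = LinearMap.range (R : H →ₗ[ℂ] H) := by
    rw [ContinuousLinearMap.toLinearMap_neg, LinearMap.range_neg]
  unfold RankLe
  rw [this]
  exact h

theorem RankLe.mul_left {R : H →L[ℂ] H} {n : ℕ} (h : RankLe R n) (S : H →L[ℂ] H) :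
    RankLe (S * R) n :=
  (LinearMap.rank_comp_le_right (R : H →ₗ[ℂ] H) (S : H →ₗ[ℂ] H)).trans h

theorem RankLe.mul_right {R : H →L[ℂ] H} {n : ℕ} (h : RankLe R n) (S : H →L[ℂ] H) :
    RankLe (R * S) n :=
  (LinearMap.rank_comp_le_left (S : H →ₗ[ℂ] H) (R : H →ₗ[ℂ] H)).trans h

theorem sval_nonneg (T : H →L[ℂ] H) (n : ℕ) : 0 ≤ sval T n := by
  apply Real.sInf_nonneg
  rintro c ⟨R, -, rfl⟩
  exact norm_nonneg _

theorem sval_le {T R : H →L[ℂ] H} {n : ℕ} (h : RankLe R n) : sval T n ≤ ‖T - R‖ := by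
  refine csInf_le ⟨0, ?_⟩ ⟨R, h, rfl⟩
  rintro c ⟨R, -, rfl⟩
  exact norm_nonneg _

theorem sval_le_norm (T : H →L[ℂ] H) (n : ℕ) : sval T n ≤ ‖T‖ := by
  simpa using sval_le (T := T) (RankLe.zero n)

theorem exists_approx (T : H →L[ℂ] H) (n : ℕ) {η : ℝ} (hη : 0 < η) :
    ∃ R, RankLe R n ∧ ‖T - R‖ < sval T n + η := by
  obtain ⟨c, ⟨R, h, rfl⟩, hc⟩ := exists_lt_of_csInf_lt (s := {c : ℝ | ∃ R : H →L[ℂ] H,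
    Module.rank ℂ (LinearMap.range (R : H →ₗ[ℂ] H)) ≤ (n : Cardinal) ∧ c = ‖T - R‖})
    ⟨_, 0, RankLe.zero n, rfl⟩ (lt_add_of_pos_right (sval T n) hη)
  exact ⟨R, h, hc⟩

theorem sval_anti (T : H →L[ℂ] H) : Antitone (sval T) := by
  intro n k hnk
  refine le_of_forall_pos_le_add fun η hη => ?_
  obtain ⟨R, hR, h⟩ := exists_approx T n hη
  exact (sval_le (hR.mono hnk)).trans h.le

theorem sval_add (S T : H →L[ℂ] H) (j k : ℕ) : sval (S + T) (j + k) ≤ sval S j + sval T k := by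
  refine le_of_forall_pos_le_add fun η hη => ?_
  obtain ⟨R, hR, h⟩ := exists_approx S j (half_pos hη)
  obtain ⟨Q, hQ, h'⟩ := exists_approx T k (half_pos hη)
  have h1 := sval_le (T := S + T) (hR.add hQ)
  have h2 : S + T - (R + Q) = (S - R) + (T - Q) := by abel
  rw [h2] at h1
  have := norm_add_le (S - R) (T - Q)
  linarith

theorem sval_neg (T : H →L[ℂ] H) (n : ℕ) : sval (-T) n ≤ sval T n := by
  refine le_of_forall_pos_le_add fun η hη => ?_
  obtain ⟨R, hR, h⟩ := exists_approx T n hη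
  have h1 := sval_le (T := -T) hR.neg
  have h2 : -T - -R = -(T - R) := by abel
  rw [h2, norm_neg] at h1
  exact h1.trans h.le

theorem sval_mul (S T : H →L[ℂ] H) (j k : ℕ) : sval (S * T) (j + k) ≤ sval S j * sval T k := by
  have h0 : ∀ η : ℝ, 0 < η → sval (S * T) (j + k) ≤ (sval S j + η) * (sval T k + η) := by
    intro η hη
    obtain ⟨R, hR, h⟩ := exists_approx S j hη
    obtain ⟨Q, hQ, h'⟩ := exists_approx T k hη
    have h1 := sval_le (T := S * T) ((hR.mul_right T).add (hQ.mul_left (S - R)))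
    have h2 : S * T - (R * T + (S - R) * Q) = (S - R) * (T - Q) := by noncomm_ring
    rw [h2] at h1
    refine h1.trans ((norm_mul_le _ _).trans ?_)
    have := sval_nonneg S j
    gcongr
  have h3 : Filter.Tendsto (fun η : ℝ => (sval S j + η) * (sval T k + η))
      (nhdsWithin 0 (Set.Ioi 0)) (nhds (sval S j * sval T k)) := by
    have : Continuous (fun η : ℝ => (sval S j + η) * (sval T k + η)) := by fun_prop
    have := (this.tendsto 0).mono_left (nhdsWithin_le_nhds (s := Set.Ioi 0))
    simpa using this
  refine ge_of_tendsto h3 ?_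
  filter_upwards [self_mem_nhdsWithin] with η hη using h0 η hη

theorem opList_zero (f : ℕ → H →L[ℂ] H) (s : ℕ) : opList f s 0 = 1 := by simp [opList]

theorem opList_succ (f : ℕ → H →L[ℂ] H) (s k : ℕ) :
    opList f s (k + 1) = f s * opList f (s + 1) k := by simp [opList, List.range'_succ]

theorem sval_opList (f : ℕ → H →L[ℂ] H) (e : ℕ → ℕ) (k s : ℕ) :
    sval (opList f s k) (∑ i ∈ Finset.range k, e (s + i)) ≤
      ∏ i ∈ Finset.range k, sval (f (s + i)) (e (s + i)) := by
  induction k generalizing s with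
  | zero =>
    rw [opList_zero]
    exact (sval_le_norm _ _).trans (by
      rw [Finset.prod_range_zero]; exact ContinuousLinearMap.norm_id_le (𝕜 := ℂ) (E := H))
  | succ k ih =>
    rw [opList_succ, Finset.sum_range_succ', Finset.prod_range_succ',
      add_comm (∑ i ∈ Finset.range k, e (s + (i + 1))), mul_comm]
    refine (sval_mul _ _ _ _).trans ?_
    refine mul_le_mul_of_nonneg_left ?_ (sval_nonneg _ _)
    have := ih (s + 1)
    simpa only [add_assoc, add_comm 1] using this

/-- Sum of the approximation numbers. -/
def nuSum (T : H →L[ℂ] H) : ℝ≥0∞ := ∑' n, ENNReal.ofReal (sval T n)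

theorem nucRep_of_sval (T : H →L[ℂ] H) (hT : nuSum T ≠ ⊤) {η : ℝ} (hη : 0 < η) :
    NucRep T (30 * nuSum T + ENNReal.ofReal (12 * η)) := by
  have hpos : ∀ k : ℕ, 0 < η / 4 ^ k := fun k => by positivity
  choose R hR hRn using fun k : ℕ => exists_approx T (2 ^ k - 1) (hpos k)
  have hR0 : R 0 = 0 := by
    have := hR 0
    unfold RankLe at this
    simp only [pow_zero, Nat.sub_self, Nat.cast_zero, nonpos_iff_eq_zero] at this
    rw [rank_zero_iff_forall_zero] at this
    ext x
    have := congrArg Subtype.val (this ⟨R 0 x, x, rfl⟩)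
    simpa using this
  set a : ℕ → ℝ≥0∞ := fun n => ENNReal.ofReal (sval T n) with ha
  have hanti : Antitone a := fun n k h => ENNReal.ofReal_le_ofReal (sval_anti T h)
  have hsum : ∑' n, a n = nuSum T := rfl
  have hbound : ∀ k, ‖T - R k‖ₑ ≤ a (2 ^ k - 1) + ENNReal.ofReal (η / 4 ^ k) := by
    intro k
    rw [← ENNReal.ofReal_add (sval_nonneg _ _) (hpos k).le, ← ofReal_norm]
    exact ENNReal.ofReal_le_ofReal (hRn k).le
  refine NucRep.hasSum (S := fun k => R (k + 1) - R k)
    (c := fun k => 6 * (2 ^ k * a (2 ^ k - 1)) + ENNReal.ofReal (6 * η * (1 / 2) ^ k)) ?_ ?_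
    (by finiteness) ?_
  · intro k
    have h1 : RankLe (R (k + 1) - R k) (3 * 2 ^ k) := by
      rw [sub_eq_add_neg]
      refine ((hR (k + 1)).add (hR k).neg).mono ?_
      have : 1 ≤ 2 ^ k := Nat.one_le_two_pow
      rw [pow_succ]; omega
    refine (NucRep.of_rank h1).mono ?_
    have h2 : ‖R (k + 1) - R k‖ₑ ≤ 2 * (a (2 ^ k - 1) + ENNReal.ofReal (η / 4 ^ k)) := by
      have h3 : R (k + 1) - R k = (T - R k) - (T - R (k + 1)) := by abel
      rw [h3, two_mul]
      refine (enorm_sub_le).trans (add_le_add (hbound k) ((hbound (k + 1)).trans ?_))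
      refine add_le_add (hanti ?_) (ENNReal.ofReal_le_ofReal ?_)
      · have : 2 ^ k ≤ 2 ^ (k + 1) := Nat.pow_le_pow_right (by norm_num) (by omega)
        omega
      · gcongr
        · norm_num
        · omega
    calc ((3 * 2 ^ k : ℕ) : ℝ≥0∞) * ‖R (k + 1) - R k‖ₑ
        ≤ ((3 * 2 ^ k : ℕ) : ℝ≥0∞) * (2 * (a (2 ^ k - 1) + ENNReal.ofReal (η / 4 ^ k))) := by
          gcongr
      _ = 6 * (2 ^ k * a (2 ^ k - 1)) + (6 * 2 ^ k) * ENNReal.ofReal (η / 4 ^ k) := by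
          push_cast; ring
      _ ≤ _ := by
          gcongr
          have : (6 * 2 ^ k : ℝ≥0∞) = ENNReal.ofReal (6 * 2 ^ k) := by
            rw [ENNReal.ofReal_mul (by norm_num), ENNReal.ofReal_pow (by norm_num)]
            norm_num
          rw [this, ← ENNReal.ofReal_mul (by positivity)]
          apply ENNReal.ofReal_le_ofReal
          rw [show (4 : ℝ) = 2 * 2 by norm_num, mul_pow]
          apply le_of_eq
          field_simp
          rw [← mul_pow]
          norm_num
  · rw [ENNReal.tsum_add, ENNReal.tsum_mul_left]
    refine add_le_add ?_ ?_
    · have h1 := ENNReal.tsum_condensed_le (f := fun n => a (n - 1))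
        (fun m n _ h => hanti (by omega))
      have h2 : ∑' k, a (k - 1) = a 0 + ∑' k, a k := by
        rw [tsum_eq_zero_add' ENNReal.summable]
        simp
      have h3 : a 0 ≤ ∑' k, a k := ENNReal.le_tsum 0
      rw [h2] at h1
      simp only [Nat.sub_self] at h1
      calc 6 * ∑' k, 2 ^ k * a (2 ^ k - 1) ≤ 6 * (a 0 + 2 * (a 0 + ∑' k, a k)) := by gcongr
        _ ≤ 6 * (∑' k, a k + 2 * (∑' k, a k + ∑' k, a k)) := by gcongr
        _ = 30 * nuSum T := by rw [hsum]; ring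
    · rw [← ENNReal.ofReal_tsum_of_nonneg (fun k => by positivity)
        (summable_geometric_two.mul_left _), tsum_mul_left, tsum_geometric_two]
      apply ENNReal.ofReal_le_ofReal
      linarith
  · intro x
    have h1 : ∀ n, ∑ k ∈ Finset.range n, (R (k + 1) - R k) x = R n x := by
      intro n
      have := Finset.sum_range_sub R n
      rw [hR0, sub_zero] at this
      rw [← this, _root_.sum_apply]
    simp only [h1]
    have h2 : Filter.Tendsto R Filter.atTop (nhds T) := by
      rw [tendsto_iff_edist_tendsto_0]
      have h3 : Filter.Tendsto (fun k : ℕ => a (2 ^ k - 1) + ENNReal.ofReal (η / 4 ^ k))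
          Filter.atTop (nhds 0) := by
        have h4 : Filter.Tendsto a Filter.atTop (nhds 0) :=
          ENNReal.tendsto_atTop_zero_of_tsum_ne_top (by rw [hsum]; exact hT)
        have h5 : Filter.Tendsto (fun k : ℕ => 2 ^ k - 1) Filter.atTop Filter.atTop := by
          refine Filter.tendsto_atTop_mono (fun k => ?_) Filter.tendsto_id
          have : k < 2 ^ k := Nat.lt_two_pow_self
          simp only [id]; omega
        have h6 : Filter.Tendsto (fun k : ℕ => ENNReal.ofReal (η / 4 ^ k))
            Filter.atTop (nhds 0) := by
          rw [← ENNReal.ofReal_zero]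
          refine ENNReal.tendsto_ofReal ?_
          have := (tendsto_pow_atTop_nhds_zero_of_lt_one (r := (1 / 4 : ℝ)) (by norm_num)
            (by norm_num)).const_mul η
          simpa [div_eq_mul_inv] using this
        simpa using (h4.comp h5).add h6
      refine tendsto_of_tendsto_of_tendsto_of_le_of_le tendsto_const_nhds h3
        (fun _ => zero_le) (fun k => ?_)
      rw [edist_comm, edist_eq_enorm_sub]
      exact hbound k
    exact (ContinuousLinearMap.apply ℂ H x).continuous.tendsto T |>.comp h2

theorem enorm_opTrace_le_nuSum (T : H →L[ℂ] H) : ‖opTrace T‖ₑ ≤ 30 * nuSum T := by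
  rcases eq_or_ne (nuSum T) ⊤ with h | h
  · rw [h]; simp
  refine ENNReal.le_of_forall_pos_le_add fun η hη _ => ?_
  have h1 := (nucRep_of_sval T h (η := (η : ℝ) / 12) (by positivity)).enorm_opTrace_le
  rwa [mul_div_cancel₀ _ (by norm_num), ENNReal.ofReal_coe_nnreal] at h1

theorem tsum_le_mul_tsum {f : ℕ → ℝ≥0∞} (hf : Antitone f) {p : ℕ} (hp : 0 < p) :
    ∑' n, f n ≤ p * ∑' n, f (p * n) := by
  have : NeZero p := ⟨hp.ne'⟩
  rw [← (Nat.divModEquiv p).symm.tsum_eq f, ENNReal.tsum_prod', ← ENNReal.tsum_mul_left]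
  refine ENNReal.tsum_le_tsum fun n => ?_
  rw [tsum_fintype]
  calc _ ≤ ∑ i : Fin p, f (p * n) := by
        refine Finset.sum_le_sum fun i _ => hf ?_
        simp [Nat.divModEquiv, mul_comm]
    _ = _ := by simp

/-! ### Products of Schatten operators -/

/-- The operator norm at position `k`, the Schatten norm elsewhere. -/
def nrm (p k i : ℕ) (T : H →L[ℂ] H) : ℝ≥0∞ := if i = k then ‖T‖ₑ else schattenNorm (p : ℝ) T

theorem schattenNorm_eq {p : ℝ} (hp : 0 ≤ p) (T : H →L[ℂ] H) :
    schattenNorm p T = (∑' n : ℕ, ENNReal.ofReal (sval T n) ^ p) ^ (1 / p) := by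
  unfold schattenNorm
  congr 1
  refine tsum_congr fun n => ?_
  rw [ENNReal.ofReal_rpow_of_nonneg (sval_nonneg _ _) hp]

theorem nuSum_opList {p k : ℕ} (hp : 0 < p) (hk : k ≤ p) (f : ℕ → H →L[ℂ] H) :
    nuSum (opList f 0 (p + 1)) ≤ p * ∏ i ∈ Finset.range (p + 1), nrm p k i (f i) := by
  have hmem : k ∈ Finset.range (p + 1) := by simp; omega
  have hp0 : (p : ℝ) ≠ 0 := by positivity
  have hcard : ((Finset.range (p + 1)).erase k).card = p := by
    rw [Finset.card_erase_of_mem hmem]; simp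
  have hanti : Antitone (fun n => ENNReal.ofReal (sval (opList f 0 (p + 1)) n)) :=
    fun n k h => ENNReal.ofReal_le_ofReal (sval_anti _ h)
  refine (tsum_le_mul_tsum hanti hp).trans ?_
  gcongr
  have h1 : ∀ n, ENNReal.ofReal (sval (opList f 0 (p + 1)) (p * n)) ≤
      ‖f k‖ₑ * ∏ i ∈ (Finset.range (p + 1)).erase k, ENNReal.ofReal (sval (f i) n) := by
    intro n
    have h2 := sval_opList f (fun i => if i = k then 0 else n) (p + 1) 0
    simp only [zero_add] at h2
    have h3 : ∑ i ∈ Finset.range (p + 1), (if i = k then 0 else n) = p * n := by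
      rw [← Finset.add_sum_erase _ _ hmem, if_pos rfl, zero_add,
        Finset.sum_congr rfl (g := fun _ => n) (fun i hi => if_neg (Finset.ne_of_mem_erase hi))]
      simp [hcard]
    rw [h3] at h2
    refine (ENNReal.ofReal_le_ofReal h2).trans ?_
    rw [ENNReal.ofReal_prod_of_nonneg (fun _ _ => sval_nonneg _ _),
      ← Finset.mul_prod_erase _ _ hmem, if_pos rfl]
    refine mul_le_mul' ?_ (le_of_eq ?_)
    · rw [← ofReal_norm]
      exact ENNReal.ofReal_le_ofReal (sval_le_norm _ _)
    · refine Finset.prod_congr rfl fun i hi => ?_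
      rw [if_neg (Finset.ne_of_mem_erase hi)]
  refine (ENNReal.tsum_le_tsum h1).trans ?_
  rw [ENNReal.tsum_mul_left, ← Finset.mul_prod_erase _ _ hmem]
  refine mul_le_mul' (by simp [nrm]) ?_
  have h4 := ENNReal.lintegral_prod_norm_pow_le (μ := MeasureTheory.Measure.count)
    ((Finset.range (p + 1)).erase k)
    (f := fun i (n : ℕ) => ENNReal.ofReal (sval (f i) n) ^ (p : ℝ))
    (fun i _ => Measurable.aemeasurable (by fun_prop)) (p := fun _ => 1 / (p : ℝ))
    (by simp [hcard, hp0]) (fun _ _ => by positivity)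
  simp only [MeasureTheory.lintegral_count] at h4
  refine le_trans (le_of_eq ?_) (h4.trans (le_of_eq ?_))
  · refine tsum_congr fun n => Finset.prod_congr rfl fun i _ => ?_
    rw [← ENNReal.rpow_mul, mul_one_div_cancel hp0, ENNReal.rpow_one]
  · refine Finset.prod_congr rfl fun i hi => ?_
    rw [nrm, if_neg (Finset.ne_of_mem_erase hi), schattenNorm_eq (by positivity)]

theorem schattenNorm_add {p : ℝ} (hp : 1 ≤ p) (S T : H →L[ℂ] H) :
    schattenNorm p (S + T) ≤ 2 * (schattenNorm p S + schattenNorm p T) := by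
  have hp0 : 0 ≤ p := by linarith
  rw [schattenNorm_eq hp0, schattenNorm_eq hp0, schattenNorm_eq hp0]
  have h1 : Antitone (fun n => ENNReal.ofReal (sval (S + T) n) ^ p) := fun n k h =>
    ENNReal.rpow_le_rpow (ENNReal.ofReal_le_ofReal (sval_anti _ h)) hp0
  have h2 : ∑' n, ENNReal.ofReal (sval (S + T) n) ^ p ≤
      2 * ∑' n, (ENNReal.ofReal (sval S n) + ENNReal.ofReal (sval T n)) ^ p := by
    refine (tsum_le_mul_tsum h1 (p := 2) (by norm_num)).trans ?_
    push_cast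
    gcongr with n
    rw [← ENNReal.ofReal_add (sval_nonneg _ _) (sval_nonneg _ _), two_mul]
    exact ENNReal.ofReal_le_ofReal (sval_add _ _ _ _)
  refine (ENNReal.rpow_le_rpow h2 (by positivity)).trans ?_
  rw [ENNReal.mul_rpow_of_nonneg _ _ (by positivity)]
  refine mul_le_mul' ?_ ?_
  · calc (2 : ℝ≥0∞) ^ (1 / p) ≤ 2 ^ (1 : ℝ) :=
        ENNReal.rpow_le_rpow_of_exponent_le (by norm_num) (by
          rw [div_le_one (by linarith)]; exact hp)
      _ = 2 := by simp
  · have h3 := ENNReal.lintegral_Lp_add_le (μ := MeasureTheory.Measure.count)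
      (f := fun n => ENNReal.ofReal (sval S n)) (g := fun n => ENNReal.ofReal (sval T n))
      (Measurable.aemeasurable (by fun_prop)) (Measurable.aemeasurable (by fun_prop)) hp
    simpa only [MeasureTheory.lintegral_count, Pi.add_apply] using h3

theorem schattenNorm_neg {p : ℝ} (hp : 0 ≤ p) (T : H →L[ℂ] H) :
    schattenNorm p (-T) ≤ schattenNorm p T := by
  rw [schattenNorm_eq hp, schattenNorm_eq hp]
  gcongr with n
  exact sval_neg T n

theorem nrm_add {p k i : ℕ} (hp : 0 < p) (S T : H →L[ℂ] H) :
    nrm p k i (S + T) ≤ 2 * (nrm p k i S + nrm p k i T) := by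
  unfold nrm
  split_ifs
  · refine (enorm_add_le _ _).trans ?_
    rw [two_mul]
    exact le_self_add
  · exact schattenNorm_add (by exact_mod_cast hp) S T

/-- Having a nuclear representation of finite weight. -/
def Nuc (T : H →L[ℂ] H) : Prop := ∃ c, c ≠ ⊤ ∧ NucRep T c

theorem Nuc.of_nuSum {T : H →L[ℂ] H} (h : nuSum T ≠ ⊤) : Nuc T :=
  ⟨_, by finiteness, nucRep_of_sval T h one_pos⟩

theorem Nuc.opList {p k : ℕ} (hp : 0 < p) (hk : k ≤ p) {f : ℕ → H →L[ℂ] H}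
    (h : ∀ i ≤ p, nrm p k i (f i) ≠ ⊤) : Nuc (opList f 0 (p + 1)) := by
  refine Nuc.of_nuSum (ne_top_of_le_ne_top ?_ (nuSum_opList hp hk f))
  refine ENNReal.mul_ne_top (by finiteness) (ENNReal.prod_ne_top fun i hi => h i ?_)
  simp at hi; omega

theorem Nuc.mul_left {T : H →L[ℂ] H} (h : Nuc T) (B : H →L[ℂ] H) : Nuc (B * T) := by
  obtain ⟨c, hc, h⟩ := h
  exact ⟨_, ENNReal.mul_ne_top enorm_ne_top hc, h.mul_left B⟩

theorem Nuc.smul {T : H →L[ℂ] H} (h : Nuc T) (z : ℂ) : Nuc (z • T) := by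
  have := h.mul_left (z • 1)
  simpa using this

theorem Nuc.add {S T : H →L[ℂ] H} (hS : Nuc S) (hT : Nuc T) : Nuc (S + T) := by
  obtain ⟨c, hc, hS⟩ := hS
  obtain ⟨d, hd, hT⟩ := hT
  exact ⟨_, ENNReal.add_ne_top.2 ⟨hc, hd⟩, hS.add hT hc hd⟩

theorem Nuc.opTrace_add {S T : H →L[ℂ] H} (hS : Nuc S) (hT : Nuc T) :
    opTrace (S + T) = opTrace S + opTrace T := by
  obtain ⟨c, hc, hS⟩ := hS
  obtain ⟨d, hd, hT⟩ := hT
  exact hS.opTrace_add hT hc hd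

theorem opTrace_neg (T : H →L[ℂ] H) : opTrace (-T) = -opTrace T := by
  have := opTrace_smul (-1) T
  simpa using this

theorem Nuc.opTrace_sub {S T : H →L[ℂ] H} (hS : Nuc S) (hT : Nuc T) :
    opTrace (S - T) = opTrace S - opTrace T := by
  have h : Nuc (-T) := by simpa using hT.smul (-1)
  rw [sub_eq_add_neg, hS.opTrace_add h, opTrace_neg, sub_eq_add_neg]

theorem Nuc.opTrace_comm {T : H →L[ℂ] H} (hT : Nuc T) (B : H →L[ℂ] H) :
    opTrace (B * T) = opTrace (T * B) := by
  obtain ⟨c, hc, hT⟩ := hT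
  exact hT.opTrace_comm hc B

theorem Nuc.opTrace_sum {ι : Type*} (s : Finset ι) {T : ι → H →L[ℂ] H} (h : ∀ i ∈ s, Nuc (T i)) :
    Nuc (∑ i ∈ s, T i) ∧ opTrace (∑ i ∈ s, T i) = ∑ i ∈ s, opTrace (T i) := by
  classical
  induction s using Finset.induction_on with
  | empty => exact ⟨⟨0, by simp, NucRep.zero⟩, by simp [opTrace]⟩
  | insert a s ha ih =>
    have h1 := ih fun i hi => h i (Finset.mem_insert_of_mem hi)
    have h2 := h a (Finset.mem_insert_self _ _)
    rw [Finset.sum_insert ha, Finset.sum_insert ha]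
    exact ⟨h2.add h1.1, by rw [h2.opTrace_add h1.1, h1.2]⟩

theorem enorm_opTrace_opList {p k : ℕ} (hp : 0 < p) (hk : k ≤ p) (ε : H →L[ℂ] H)
    (f : ℕ → H →L[ℂ] H) :
    ‖opTrace (ε * opList f 0 (p + 1))‖ₑ ≤
      30 * ‖ε‖ₑ * p * ∏ i ∈ Finset.range (p + 1), nrm p k i (f i) := by
  refine (enorm_opTrace_le_nuSum _).trans ?_
  have h1 : nuSum (ε * opList f 0 (p + 1)) ≤ ‖ε‖ₑ * nuSum (opList f 0 (p + 1)) := by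
    unfold nuSum
    rw [← ENNReal.tsum_mul_left]
    refine ENNReal.tsum_le_tsum fun n => ?_
    rw [← ofReal_norm, ← ENNReal.ofReal_mul (norm_nonneg _)]
    apply ENNReal.ofReal_le_ofReal
    have := sval_mul ε (opList f 0 (p + 1)) 0 n
    rw [zero_add] at this
    exact this.trans (mul_le_mul_of_nonneg_right (sval_le_norm _ _) (sval_nonneg _ _))
  rw [mul_assoc, mul_assoc]
  gcongr
  refine h1.trans ?_
  gcongr
  exact nuSum_opList hp hk f

/-! ### Combinatorics of ordered products -/

theorem opList_congr {f g : ℕ → H →L[ℂ] H} {s k : ℕ} (h : ∀ i, s ≤ i → i < s + k → f i = g i) :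
    opList f s k = opList g s k := by
  unfold opList
  congr 1
  refine List.map_congr_left fun i hi => ?_
  rw [List.mem_range'_1] at hi
  exact h i hi.1 hi.2

theorem opList_split (f : ℕ → H →L[ℂ] H) {p k : ℕ} (hk : k ≤ p) :
    opList f 0 (p + 1) = opList f 0 k * f k * opList f (k + 1) (p - k) := by
  have h1 : p + 1 = k + ((p - k) + 1) := by omega
  rw [mul_assoc, ← opList_succ, h1]
  unfold opList
  rw [← List.prod_append, ← List.map_append]
  congr 2
  have := List.range'_append_1 (s := 0) (m := k) (n := p - k + 1)
  rw [zero_add] at this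
  exact this.symm

/-- The `j`-th telescoping family. -/
def mix (f g : ℕ → H →L[ℂ] H) (j i : ℕ) : H →L[ℂ] H :=
  if i < j then g i else if i = j then f i - g i else f i

theorem opList_telescope (f g : ℕ → H →L[ℂ] H) (n s : ℕ) :
    opList f s n - opList g s n = ∑ j ∈ Finset.range n, opList (mix f g (s + j)) s n := by
  induction n generalizing s with
  | zero => simp [opList_zero]
  | succ n ih =>
    rw [Finset.sum_range_succ']
    have h1 : ∀ j, opList (mix f g (s + (j + 1))) s (n + 1)
        = g s * opList (mix f g (s + 1 + j)) (s + 1) n := by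
      intro j
      rw [opList_succ, show s + (j + 1) = s + 1 + j by ring]
      congr 1
      rw [mix, if_pos (by omega)]
    have h2 : opList (mix f g (s + 0)) s (n + 1) = (f s - g s) * opList f (s + 1) n := by
      rw [opList_succ]
      congr 1
      · simp [mix]
      · refine opList_congr fun i hi _ => ?_
        rw [mix, if_neg (by omega), if_neg (by omega)]
    simp only [h1, h2]
    rw [← Finset.mul_sum, ← ih (s + 1), opList_succ, opList_succ]
    noncomm_ring

/-- Continuity of the trace of products. -/
theorem tendsto_opTrace {α : Type*} {l : Filter α} {p k : ℕ} (hp : 0 < p) (hk : k ≤ p)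
    (ε : H →L[ℂ] H) (f : α → ℕ → H →L[ℂ] H) (g : ℕ → H →L[ℂ] H)
    (hg : ∀ i ≤ p, nrm p k i (g i) ≠ ⊤)
    (hf : ∀ i ≤ p, Filter.Tendsto (fun s => nrm p k i (f s i - g i)) l (nhds 0)) :
    Filter.Tendsto (fun s => opTrace (ε * opList (f s) 0 (p + 1))) l
      (nhds (opTrace (ε * opList g 0 (p + 1)))) := by
  rw [tendsto_iff_edist_tendsto_0]
  set b : ℕ → ℕ → α → ℝ≥0∞ := fun j i s => if i = j then nrm p k i (f s i - g i) else
    2 * (nrm p k i (f s i - g i) + nrm p k i (g i)) with hb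
  have hbt : ∀ j ∈ Finset.range (p + 1), Filter.Tendsto
      (fun s => ∏ i ∈ Finset.range (p + 1), b j i s) l (nhds 0) := by
    intro j hj
    have h1 := ENNReal.tendsto_finsetProd_of_ne_top (f := b j) (x := l)
      (a := fun i => if i = j then 0 else 2 * (0 + nrm p k i (g i))) (Finset.range (p + 1)) ?_ ?_
    · rwa [Finset.prod_eq_zero hj (by simp)] at h1
    · intro i hi
      have hi' : i ≤ p := by simp at hi; omega
      by_cases hij : i = j
      · simp only [hb, if_pos hij]
        exact hf i hi'
      · simp only [hb, if_neg hij]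
        exact ENNReal.Tendsto.const_mul ((hf i hi').add tendsto_const_nhds) (Or.inr (by norm_num))
    · intro i hi
      have hi' : i ≤ p := by simp at hi; omega
      have := hg i hi'
      split_ifs
      · simp
      · finiteness
  have hlim : Filter.Tendsto (fun s => ∑ j ∈ Finset.range (p + 1),
      30 * ‖ε‖ₑ * p * ∏ i ∈ Finset.range (p + 1), b j i s) l (nhds 0) := by
    have := tendsto_finsetSum (Finset.range (p + 1)) (fun j hj =>
      ENNReal.Tendsto.const_mul (a := 30 * ‖ε‖ₑ * p) (hbt j hj) (Or.inr (by finiteness)))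
    simpa using this
  have hfin : ∀ᶠ s in l, ∀ i ∈ Finset.range (p + 1), nrm p k i (f s i - g i) < ⊤ := by
    rw [Filter.eventually_all_finset]
    intro i hi
    have hi' : i ≤ p := by simp at hi; omega
    exact (hf i hi').eventually (gt_mem_nhds ENNReal.zero_lt_top)
  refine tendsto_of_tendsto_of_tendsto_of_le_of_le' tendsto_const_nhds hlim
    (Filter.Eventually.of_forall fun _ => zero_le) ?_
  filter_upwards [hfin] with s hs
  have hs' : ∀ i ≤ p, nrm p k i (f s i - g i) ≠ ⊤ := fun i hi => (hs i (by simp; omega)).ne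
  have hfs : ∀ i, nrm p k i (f s i) ≤ 2 * (nrm p k i (f s i - g i) + nrm p k i (g i)) := by
    intro i
    have := nrm_add (k := k) (i := i) hp (f s i - g i) (g i)
    rwa [sub_add_cancel] at this
  have hfs' : ∀ i ≤ p, nrm p k i (f s i) ≠ ⊤ := by
    intro i hi
    have h1 := hs' i hi
    have h2 := hg i hi
    exact ne_top_of_le_ne_top (by finiteness) (hfs i)
  have hmix : ∀ j, ∀ i ≤ p, nrm p k i (mix (f s) g j i) ≤ b j i s := by
    intro j i hi
    simp only [mix, hb]
    rcases lt_trichotomy i j with h | h | h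
    · rw [if_pos h, if_neg h.ne, two_mul]
      exact le_trans le_add_self le_self_add
    · rw [if_neg (by omega), if_pos h, if_pos h]
    · rw [if_neg (by omega), if_neg (by omega), if_neg (by omega)]
      exact hfs i
  have hbfin : ∀ j, ∀ i ≤ p, b j i s ≠ ⊤ := by
    intro j i hi
    have h1 := hs' i hi
    have h2 := hg i hi
    simp only [hb]
    split_ifs
    · exact h1
    · finiteness
  rw [edist_eq_enorm_sub, ← Nuc.opTrace_sub ((Nuc.opList hp hk hfs').mul_left ε)
    ((Nuc.opList hp hk hg).mul_left ε), ← mul_sub, opList_telescope, Finset.mul_sum,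
    (Nuc.opTrace_sum _ (fun j _ => (Nuc.opList hp hk fun i hi =>
      ne_top_of_le_ne_top (hbfin (0 + j) i hi) (hmix (0 + j) i hi)).mul_left ε)).2]
  refine (enorm_sum_le _ _).trans (Finset.sum_le_sum fun j _ => ?_)
  rw [zero_add]
  refine (enorm_opTrace_opList hp hk ε _).trans ?_
  gcongr with i hi
  exact hmix j i (by simp at hi; omega)

/-! ### Commutators -/

theorem commOp_anti {F : H →L[ℂ] H} (hF2 : F * F = 1) (y : H →L[ℂ] H) :
    F * commOp F y = -(commOp F y * F) := by
  have h1 : F * (F * y - y * F) = F * F * y - F * y * F := by noncomm_ring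
  have h2 : (F * y - y * F) * F = F * y * F - y * (F * F) := by noncomm_ring
  unfold commOp
  rw [h1, h2, hF2]
  noncomm_ring

theorem commOp_sub (F x y : H →L[ℂ] H) : commOp F (x - y) = commOp F x - commOp F y := by
  unfold commOp
  noncomm_ring

theorem F_opList {F : H →L[ℂ] H} {f : ℕ → H →L[ℂ] H} (hf : ∀ i, F * f i = -(f i * F))
    (s k : ℕ) : F * opList f s k = ((-1 : ℂ) ^ k) • (opList f s k * F) := by
  induction k generalizing s with
  | zero => simp [opList_zero]
  | succ k ih =>
    rw [opList_succ, ← mul_assoc, hf, neg_mul, mul_assoc, ih, mul_smul_comm, pow_succ,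
      mul_neg_one, neg_smul, mul_assoc]

/-- Moving the commutator around under the supertrace. -/
theorem supertrace_move {ε F : H →L[ℂ] H} (hF2 : F * F = 1) (hFε : F * ε = -(ε * F))
    (y L z R : H →L[ℂ] H) (j l : ℕ) (hjl : Odd (j + l))
    (hL : F * L = ((-1 : ℂ) ^ j) • (L * F)) (hR : F * R = ((-1 : ℂ) ^ l) • (R * F))
    (h1 : Nuc (commOp F y * L * z * R)) (h2 : Nuc (y * L * commOp F z * R)) :
    opTrace (ε * (y * L * commOp F z * R)) =
      (-1) ^ (j + 1) * opTrace (ε * (commOp F y * L * z * R)) := by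
  set X := y * L * z * R with hX
  set Y := F * X + X * F with hY
  have hsgn : ((-1 : ℂ) ^ j) * (-1) ^ l = -1 := by rw [← pow_add]; exact hjl.neg_one_pow
  have hjj : ((-1 : ℂ) ^ j) * (-1) ^ j = 1 := by rw [← mul_pow]; simp
  have hl : ((-1 : ℂ) ^ l) = -(-1) ^ j := by
    calc ((-1 : ℂ) ^ l) = ((-1 : ℂ) ^ j * (-1) ^ j) * (-1) ^ l := by rw [hjj, one_mul]
      _ = _ := by rw [mul_assoc, hsgn]; ring
  have hRF : R * F = -(((-1 : ℂ) ^ j) • (F * R)) := by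
    rw [hR, hl, smul_smul, mul_neg, hjj]
    simp
  have hYeq : Y = commOp F y * L * z * R + ((-1 : ℂ) ^ j) • (y * L * commOp F z * R) := by
    have e1 : X * F = -(((-1 : ℂ) ^ j) • (y * L * z * F * R)) := by
      rw [hX, mul_assoc, hRF, mul_neg, mul_smul_comm, ← mul_assoc]
    have e2 : F * X = commOp F y * L * z * R + ((-1 : ℂ) ^ j) • (y * L * F * z * R) := by
      have : y * (F * L) * z * R = ((-1 : ℂ) ^ j) • (y * L * F * z * R) := by
        rw [hL]
        simp only [mul_smul_comm, smul_mul_assoc, mul_assoc]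
      rw [← this, hX]
      unfold commOp
      noncomm_ring
    have e3 : y * L * commOp F z * R = y * L * F * z * R - y * L * z * F * R := by
      unfold commOp
      noncomm_ring
    rw [hY, e1, e2, e3, smul_sub]
    abel
  have hYn : Nuc Y := by
    rw [hYeq]
    exact h1.add (h2.smul _)
  have hFYF : F * Y * F = Y := by
    have e1 : F * Y * F = (F * F) * X * F + F * X * (F * F) := by rw [hY]; noncomm_ring
    rw [e1, hF2, hY]
    noncomm_ring
  have h0 : opTrace (ε * Y) = 0 := by
    have e1 : opTrace (ε * Y) = opTrace (F * (ε * (F * Y))) := by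
      rw [((hYn.mul_left F).mul_left ε).opTrace_comm F, mul_assoc, hFYF]
    have e2 : F * (ε * (F * Y)) = -(ε * Y) := by
      rw [← mul_assoc, hFε, neg_mul, mul_assoc, ← mul_assoc F F, hF2, one_mul]
    rw [e2, opTrace_neg] at e1
    have : (2 : ℂ) * opTrace (ε * Y) = 0 := by linear_combination e1
    simpa using this
  rw [hYeq, mul_add, mul_smul_comm, (h1.mul_left ε).opTrace_add ((h2.mul_left ε).smul _),
    opTrace_smul] at h0
  rw [pow_succ]
  linear_combination ((-1 : ℂ) ^ j) * h0 - opTrace (ε * (y * L * commOp F z * R)) * hjj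

/-- Family with a distinguished entry `D` at position `k`. -/
def ins (g : ℕ → H →L[ℂ] H) (D : H →L[ℂ] H) (f : ℕ → H →L[ℂ] H) (k i : ℕ) : H →L[ℂ] H :=
  if i < k then g i else if i = k then D else f i

theorem opList_ins (g : ℕ → H →L[ℂ] H) (D : H →L[ℂ] H) (f : ℕ → H →L[ℂ] H) {p k : ℕ}
    (hk : k ≤ p) :
    opList (ins g D f k) 0 (p + 1) = opList g 0 k * D * opList f (k + 1) (p - k) := by
  rw [opList_split _ hk]
  congr 1
  · congr 1
    · refine opList_congr fun i _ hi => ?_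
      rw [ins, if_pos (by omega)]
    · simp [ins]
  · refine opList_congr fun i hi _ => ?_
    rw [ins, if_neg (by omega), if_neg (by omega)]

/-- Difference formula for the character. -/
theorem character_sub {p : ℕ} (hp : 0 < p) (hpe : Even p) {ε F : H →L[ℂ] H} (hF2 : F * F = 1)
    (hFε : F * ε = -(ε * F)) (x y : ℕ → H →L[ℂ] H)
    (hx : ∀ i, schattenNorm (p : ℝ) (commOp F (x i)) ≠ ⊤)
    (hy : ∀ i, schattenNorm (p : ℝ) (commOp F (y i)) ≠ ⊤) :
    opTrace (ε * x 0 * opList (fun i => commOp F (x i)) 1 p) -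
      opTrace (ε * y 0 * opList (fun i => commOp F (y i)) 1 p) =
    ∑ k ∈ Finset.range (p + 1), (-1 : ℂ) ^ k *
      opTrace (ε * opList (ins (fun i => commOp F (y i)) (x k - y k)
        (fun i => commOp F (x i)) k) 0 (p + 1)) := by
  have hp1 : (1 : ℝ) ≤ p := by exact_mod_cast hp
  have hxy : ∀ i, schattenNorm (p : ℝ) (commOp F (x i) - commOp F (y i)) ≠ ⊤ := by
    intro i
    rw [sub_eq_add_neg]
    refine ne_top_of_le_ne_top ?_ (schattenNorm_add hp1 _ _)
    have h1 := hx i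
    have h2 := ne_top_of_le_ne_top (hy i) (schattenNorm_neg (by linarith) (commOp F (y i)))
    finiteness
  set f : ℕ → H →L[ℂ] H := fun i => if i = 0 then x 0 else commOp F (x i) with hf
  set g : ℕ → H →L[ℂ] H := fun i => if i = 0 then y 0 else commOp F (y i) with hg
  have hfl : x 0 * opList (fun i => commOp F (x i)) 1 p = opList f 0 (p + 1) := by
    rw [opList_succ]
    congr 1
    exact opList_congr fun i hi _ => by rw [hf]; simp only; rw [if_neg (by omega)]
  have hgl : y 0 * opList (fun i => commOp F (y i)) 1 p = opList g 0 (p + 1) := by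
    rw [opList_succ]
    congr 1
    exact opList_congr fun i hi _ => by rw [hg]; simp only; rw [if_neg (by omega)]
  have hnf : ∀ i ≤ p, nrm p 0 i (f i) ≠ ⊤ := by
    intro i _
    simp only [nrm, hf]
    split_ifs
    · exact enorm_ne_top
    · exact hx i
  have hng : ∀ i ≤ p, nrm p 0 i (g i) ≠ ⊤ := by
    intro i _
    simp only [nrm, hg]
    split_ifs
    · exact enorm_ne_top
    · exact hy i
  have hnm : ∀ j, ∀ i ≤ p, nrm p 0 i (mix f g j i) ≠ ⊤ := by
    intro j i hi
    rcases lt_trichotomy i j with h | h | h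
    · rw [mix, if_pos h]; exact hng i hi
    · rw [mix, if_neg (by omega), if_pos h]
      simp only [nrm, hf, hg]
      split_ifs
      · exact enorm_ne_top
      · exact hxy i
    · rw [mix, if_neg (by omega), if_neg (by omega)]; exact hnf i hi
  have hni : ∀ k, ∀ i ≤ p, nrm p k i (ins (fun i => commOp F (y i)) (x k - y k)
        (fun i => commOp F (x i)) k i) ≠ ⊤ := by
    intro k i _
    unfold nrm ins
    rcases lt_trichotomy i k with h | h | h
    · rw [if_pos h, if_neg (by omega)]; exact hy i
    · rw [if_pos h]; exact enorm_ne_top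
    · rw [if_neg (by omega), if_neg (by omega), if_neg (by omega)]; exact hx i
  rw [mul_assoc, mul_assoc, hfl, hgl,
    ← Nuc.opTrace_sub ((Nuc.opList hp (Nat.zero_le _) hnf).mul_left ε)
      ((Nuc.opList hp (Nat.zero_le _) hng).mul_left ε), ← mul_sub, opList_telescope,
    Finset.mul_sum, (Nuc.opTrace_sum _ (fun j _ => (Nuc.opList hp (Nat.zero_le _)
      (hnm (0 + j))).mul_left ε)).2]
  refine Finset.sum_congr rfl fun k hk => ?_
  have hk : k ≤ p := by simp at hk; omega
  rw [zero_add]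
  rcases k with _ | j
  · rw [pow_zero, one_mul]
    congr 2
    refine opList_congr fun i _ _ => ?_
    unfold mix ins
    by_cases h : i = 0
    · subst h; simp [hf, hg]
    · simp [hf, h]
  · have e1 : opList (mix f g (j + 1)) 0 (p + 1) =
        y 0 * opList (fun i => commOp F (y i)) 1 j * commOp F (x (j + 1) - y (j + 1)) *
          opList (fun i => commOp F (x i)) (j + 1 + 1) (p - (j + 1)) := by
      rw [opList_split _ hk]
      congr 1
      · congr 1
        · rw [opList_succ]
          congr 1
          refine opList_congr fun i hi hi' => ?_
          rw [mix, if_pos (by omega), hg]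
          simp only
          rw [if_neg (by omega)]
        · simp [mix, hf, hg, commOp_sub]
      · refine opList_congr fun i hi hi' => ?_
        rw [mix, if_neg (by omega), if_neg (by omega), hf]
        simp only
        rw [if_neg (by omega)]
    have e2 := opList_ins (fun i => commOp F (y i)) (x (j + 1) - y (j + 1))
        (fun i => commOp F (x i)) hk
    rw [opList_succ _ 0 j] at e2
    have n1 := Nuc.opList hp (Nat.zero_le _) (hnm (j + 1))
    have n2 := Nuc.opList hp hk (hni (j + 1))
    rw [e1] at n1 ⊢
    rw [e2] at n2 ⊢
    refine supertrace_move hF2 hFε _ _ _ _ j (p - (j + 1)) ?_ (F_opList (fun i =>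
      commOp_anti hF2 _) _ _) (F_opList (fun i => commOp_anti hF2 _) _ _) n2 n1
    obtain ⟨r, hr⟩ := hpe
    exact ⟨r - 1, by omega⟩

/-- Differentiability of the character along a homotopy of representations.  Let `p = 2m`
be a positive even integer, `(H, ε)` ℤ₂-graded, `F² = 1`, `Fε = -εF`, and
`ρ_t : A → B(H)` homomorphisms into even operators such that `[F,ρ_t(a)]` is `p`-Schatten,
`t ↦ [F,ρ_t(a)]` is continuous in the `p`-Schatten norm, and `t ↦ ρ_t(a)` is `C¹` in
operator norm with derivative `δ_t(a)`.  Then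
`t ↦ τ^p_t(a₀,…,a_p) = (2iπ)^m m! Trace(ε ρ_t(a₀)[F,ρ_t(a₁)]⋯[F,ρ_t(a_p)])` is
differentiable on `[0,1]`, with the stated derivative. -/
theorem deriv_of_character (m p : ℕ) (hm : 0 < m) (hp : p = 2 * m)
    (ε F : H →L[ℂ] H) (hε : IsSelfAdjoint ε) (hε2 : ε * ε = 1) (hF2 : F * F = 1)
    (hFε : F * ε = -(ε * F))
    (ρ : ℝ → (A →ₙₐ[ℂ] (H →L[ℂ] H)))
    (heven : ∀ t ∈ Set.Icc (0 : ℝ) 1, ∀ a : A, ε * ρ t a = ρ t a * ε)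
    (hS : ∀ t ∈ Set.Icc (0 : ℝ) 1, ∀ a : A, MemSchatten (p : ℝ) (commOp F (ρ t a)))
    (hScont : ∀ a : A, ∀ t ∈ Set.Icc (0 : ℝ) 1,
      Filter.Tendsto (fun s => schattenNorm (p : ℝ) (commOp F (ρ s a) - commOp F (ρ t a)))
        (nhdsWithin t (Set.Icc (0 : ℝ) 1)) (nhds 0))
    (δ : ℝ → A → (H →L[ℂ] H))
    (hderiv : ∀ a : A, ∀ t ∈ Set.Icc (0 : ℝ) 1,
      HasDerivWithinAt (fun s => ρ s a) (δ t a) (Set.Icc (0 : ℝ) 1) t)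
    (hδcont : ∀ a : A, ContinuousOn (fun t => δ t a) (Set.Icc (0 : ℝ) 1)) :
    ∀ a : Fin (p + 1) → A, ∀ t ∈ Set.Icc (0 : ℝ) 1,
      HasDerivWithinAt
        (fun s => (2 * Complex.I * (Real.pi : ℂ)) ^ m * (Nat.factorial m : ℂ) *
          opTrace (ε * ρ s (a 0) *
            opList (fun i => commOp F (ρ s (natIdx (m := p) a i))) 1 p))
        ((2 * Complex.I * (Real.pi : ℂ)) ^ m * (Nat.factorial m : ℂ) *
          ∑ k ∈ Finset.range (p + 1), (-1 : ℂ) ^ k *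
            opTrace (ε * opList (fun i => commOp F (ρ t (natIdx (m := p) a i))) 0 k *
              δ t (natIdx (m := p) a k) *
              opList (fun i => commOp F (ρ t (natIdx (m := p) a i))) (k + 1) (p - k)))
        (Set.Icc (0 : ℝ) 1) t := by
  intro a t ht
  have hp0 : 0 < p := by omega
  have hpe : Even p := ⟨m, by omega⟩
  set x : ℝ → ℕ → H →L[ℂ] H := fun s i => ρ s (natIdx (m := p) a i) with hx
  have ha0 : ∀ s, ρ s (a 0) = x s 0 := by
    intro s
    simp only [hx, natIdx]
    congr 2
  refine HasDerivWithinAt.const_mul _ ?_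
  rw [hasDerivWithinAt_iff_tendsto_slope]
  have hfin : ∀ s ∈ Set.Icc (0 : ℝ) 1, ∀ i, schattenNorm (p : ℝ) (commOp F (x s i)) ≠ ⊤ :=
    fun s hs i => (hS s hs _).2.ne
  have key : ∀ k ∈ Finset.range (p + 1), Filter.Tendsto (fun s : ℝ => (-1 : ℂ) ^ k *
      opTrace (ε * opList (ins (fun i => commOp F (x t i)) ((s - t)⁻¹ • (x s k - x t k))
        (fun i => commOp F (x s i)) k) 0 (p + 1)))
      (nhdsWithin t (Set.Icc (0 : ℝ) 1 \ {t}))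
      (nhds ((-1 : ℂ) ^ k * opTrace (ε * opList (fun i => commOp F (x t i)) 0 k *
              δ t (natIdx (m := p) a k) *
              opList (fun i => commOp F (x t i)) (k + 1) (p - k)))) := by
    intro k hk
    have hk : k ≤ p := by simp at hk; omega
    refine Filter.Tendsto.const_mul _ ?_
    have e1 := opList_ins (fun i => commOp F (x t i)) (δ t (natIdx (m := p) a k))
      (fun i => commOp F (x t i)) hk
    have e2 : ε * opList (fun i => commOp F (x t i)) 0 k * δ t (natIdx (m := p) a k) *
        opList (fun i => commOp F (x t i)) (k + 1) (p - k) =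
        ε * opList (ins (fun i => commOp F (x t i)) (δ t (natIdx (m := p) a k))
          (fun i => commOp F (x t i)) k) 0 (p + 1) := by
      rw [e1]; simp only [mul_assoc]
    rw [e2]
    refine tendsto_opTrace hp0 hk ε (fun s => ins (fun i => commOp F (x t i))
      ((s - t)⁻¹ • (x s k - x t k)) (fun i => commOp F (x s i)) k) _ ?_ ?_
    · intro i _
      unfold nrm ins
      rcases lt_trichotomy i k with h | h | h
      · rw [if_pos h, if_neg (by omega)]; exact hfin t ht i
      · rw [if_pos h]; exact enorm_ne_top
      · rw [if_neg (by omega), if_neg (by omega), if_neg (by omega)]; exact hfin t ht i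
    · intro i _
      unfold nrm ins
      rcases lt_trichotomy i k with h | h | h
      · have h0 : schattenNorm (p : ℝ) (0 : H →L[ℂ] H) = 0 := by
          have hz : ∀ n, sval (0 : H →L[ℂ] H) n = 0 := fun n =>
            le_antisymm ((sval_le_norm _ _).trans (by simp)) (sval_nonneg _ _)
          have : (p : ℝ) ≠ 0 := by positivity
          unfold schattenNorm
          simp only [hz, Real.zero_rpow this]
          simp [hp0]
        simp only [if_pos h, if_neg h.ne, sub_self, h0]
        exact tendsto_const_nhds
      · subst h
        simp only [lt_irrefl, if_false, if_true]
        have h1 := hasDerivWithinAt_iff_tendsto_slope.1 (hderiv (natIdx (m := p) a i) t ht)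
        rw [tendsto_iff_edist_tendsto_0] at h1
        simpa only [edist_eq_enorm_sub, slope_def_module] using h1
      · have h1 : ¬ i < k := by omega
        have h2 : ¬ i = k := by omega
        simp only [if_neg h1, if_neg h2]
        exact (hScont _ t ht).mono_left (nhdsWithin_mono _ Set.sdiff_subset)
  refine (tendsto_finsetSum _ key).congr' ?_
  filter_upwards [self_mem_nhdsWithin] with s hs
  rw [slope_def_module]
  simp only [ha0]
  rw [character_sub hp0 hpe hF2 hFε (x s) (x t) (hfin s hs.1) (hfin t ht), Finset.smul_sum]
  refine Finset.sum_congr rfl fun k hk => ?_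
  have hk : k ≤ p := by simp at hk; omega
  rw [opList_ins _ _ _ hk, opList_ins _ _ _ hk, mul_smul_comm, smul_mul_assoc, mul_smul_comm,
    ← Complex.coe_smul, opTrace_smul, Complex.real_smul]
  ring
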